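/- Fix α ∈ [0,1) and x ∈ Ω, and assume 𝒢({x}, α) is nonempty. Then the supremum over all valid level-(1−α) lower confidence bounds B of the value B(x) equals inf{E[F] : F ∈ 𝒻({x}, α)}; in particular, every valid level-(1−α) lower confidence bound B satisfies B(x) ≤ inf{E[F] : F ∈ 𝒻({x}, α)}. -/

import Mathlib

noncomputable section

/-- Distributions on the finite support `S`, viewed as points of the probability
simplex inside `EuclideanSpace ℝ S` (Euclidean metric). -/
def distSet (S : Finset ℝ) : Set (EuclideanSpace ℝ ↥S) :=
  {F | (∀ s, 0 ≤ F s) ∧ ∑ s, F s = 1}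

/-- Mean of a distribution on `S`. -/
def distMean (S : Finset ℝ) (F : EuclideanSpace ℝ ↥S) : ℝ :=
  ∑ s : ↥S, F s * (s : ℝ)

open Classical in
/-- `P_F[A]`: probability of a set `A` of `n`-tuples under `n` i.i.d. draws from `F`. -/
def probOf (S : Finset ℝ) (n : ℕ) (F : EuclideanSpace ℝ ↥S)
    (A : Set (Fin n → ↥S)) : ℝ :=
  ∑ y : Fin n → ↥S, if y ∈ A then ∏ i, F (y i) else 0

/-- The interior likely set `𝒢(A, α)`. -/
def intLikely (S : Finset ℝ) (n : ℕ) (A : Set (Fin n → ↥S)) (α : ℝ) :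
    Set (EuclideanSpace ℝ ↥S) :=
  {F | F ∈ distSet S ∧ α < probOf S n F A}

/-- The likely set `𝒻(A, α)`: the closure of `𝒢(A, α)`. -/
def likely (S : Finset ℝ) (n : ℕ) (A : Set (Fin n → ↥S)) (α : ℝ) :
    Set (EuclideanSpace ℝ ↥S) :=
  closure (intLikely S n A α)

/-- `Ω`: the set of nondecreasing (`sorted`) `n`-tuples over `S`. -/
def sortedTuples (S : Finset ℝ) (n : ℕ) : Set (Fin n → ↥S) :=
  {x | Monotone x}

/-- The sorted version of a tuple. -/
def sortTup (S : Finset ℝ) (n : ℕ) (y : Fin n → ↥S) : Fin n → ↥S :=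
  y ∘ Tuple.sort y

/-- Probability of a set `A ⊆ Ω` of sorted tuples, identifying tuples with
their sorted versions. -/
def probSorted (S : Finset ℝ) (n : ℕ) (F : EuclideanSpace ℝ ↥S)
    (A : Set (Fin n → ↥S)) : ℝ :=
  probOf S n F {y | sortTup S n y ∈ A}

/-- Interior likely set for a set of sorted tuples. -/
def intLikelySorted (S : Finset ℝ) (n : ℕ) (A : Set (Fin n → ↥S)) (α : ℝ) :
    Set (EuclideanSpace ℝ ↥S) :=
  {F | F ∈ distSet S ∧ α < probSorted S n F A}

/-- Likely set for a set of sorted tuples. -/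
def likelySorted (S : Finset ℝ) (n : ℕ) (A : Set (Fin n → ↥S)) (α : ℝ) :
    Set (EuclideanSpace ℝ ↥S) :=
  closure (intLikelySorted S n A α)

/-- Upper set `Ω(x, R)` of `x` under a relation `R` on `Ω`. -/
def upperSet (S : Finset ℝ) (n : ℕ) (r : (Fin n → ↥S) → (Fin n → ↥S) → Prop)
    (x : Fin n → ↥S) : Set (Fin n → ↥S) :=
  {y ∈ sortedTuples S n | r x y}

/-- Pessimal bound `B_R^*(x) = inf {E[F] : F ∈ 𝒻(Ω(x,R), α)}`. -/
def pessimal (S : Finset ℝ) (n : ℕ) (r : (Fin n → ↥S) → (Fin n → ↥S) → Prop)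
    (α : ℝ) (x : Fin n → ↥S) : ℝ :=
  sInf (distMean S '' likelySorted S n (upperSet S n r x) α)

/-- `B` is a valid level-`(1-α)` lower confidence bound for the mean. -/
def validBound (S : Finset ℝ) (n : ℕ) (α : ℝ) (B : (Fin n → ↥S) → ℝ) : Prop :=
  ∀ F ∈ distSet S, 1 - α ≤ probOf S n F {y | B (sortTup S n y) ≤ distMean S F}

theorem aux_total (S : Finset ℝ) (n : ℕ) (F : EuclideanSpace ℝ ↥S) (hF : F ∈ distSet S) :
    ∑ y : Fin n → ↥S, ∏ i, F (y i) = 1 := by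
  have h := Finset.prod_univ_sum (fun _ : Fin n => (Finset.univ : Finset ↥S))
    (fun _ s => F s)
  rw [Fintype.piFinset_univ] at h
  rw [← h, hF.2]
  simp

theorem aux_mono (S : Finset ℝ) (n : ℕ) (F : EuclideanSpace ℝ ↥S) (hF : F ∈ distSet S)
    (A B : Set (Fin n → ↥S)) (h : A ⊆ B) : probOf S n F A ≤ probOf S n F B := by
  classical
  unfold probOf
  apply Finset.sum_le_sum
  intro y _
  have hp : 0 ≤ ∏ i, F (y i) := Finset.prod_nonneg fun i _ => hF.1 _
  by_cases hA : y ∈ A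
  · simp [hA, h hA]
  · by_cases hB : y ∈ B <;> simp [hA, hB, hp]

theorem aux_compl (S : Finset ℝ) (n : ℕ) (F : EuclideanSpace ℝ ↥S) (hF : F ∈ distSet S)
    (A : Set (Fin n → ↥S)) : probOf S n F A + probOf S n F Aᶜ = 1 := by
  classical
  unfold probOf
  rw [← Finset.sum_add_distrib, ← aux_total S n F hF]
  apply Finset.sum_congr rfl
  intro y _
  by_cases hA : y ∈ A <;> simp [hA]

theorem aux_univ (S : Finset ℝ) (n : ℕ) (F : EuclideanSpace ℝ ↥S) (hF : F ∈ distSet S) :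
    probOf S n F Set.univ = 1 := by
  simp [probOf, aux_total S n F hF]

theorem aux_cont (S : Finset ℝ) : Continuous (distMean S) := by
  unfold distMean
  fun_prop

theorem aux_min (S : Finset ℝ) (hS : S.Nonempty) (F : EuclideanSpace ℝ ↥S)
    (hF : F ∈ distSet S) : S.min' hS ≤ distMean S F := by
  have : S.min' hS = ∑ s : ↥S, F s * S.min' hS := by
    rw [← Finset.sum_mul, hF.2, one_mul]
  rw [this]
  exact Finset.sum_le_sum fun s _ =>
    mul_le_mul_of_nonneg_left (S.min'_le _ s.2) (hF.1 s)

/-- the supremum of `B x` over all valid level-`(1-α)` lower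
confidence bounds `B` equals `inf {E[F] : F ∈ 𝒻({x}, α)}`; in particular every
valid bound `B` satisfies `B x ≤ inf {E[F] : F ∈ 𝒻({x}, α)}`. -/
theorem stmt6 (S : Finset ℝ) (hS : S.Nonempty) (n : ℕ) (hn : 1 ≤ n)
    (α : ℝ) (hα0 : 0 ≤ α) (hα1 : α < 1)
    (x : Fin n → ↥S) (hx : x ∈ sortedTuples S n)
    (hne : (intLikelySorted S n {x} α).Nonempty) :
    (∀ B : (Fin n → ↥S) → ℝ, validBound S n α B →
        B x ≤ sInf (distMean S '' likelySorted S n {x} α)) ∧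
    sSup {b : ℝ | ∃ B : (Fin n → ↥S) → ℝ, validBound S n α B ∧ b = B x} =
      sInf (distMean S '' likelySorted S n {x} α) := by
  classical
  have key : ∀ B : (Fin n → ↥S) → ℝ, validBound S n α B →
      B x ≤ sInf (distMean S '' likelySorted S n {x} α) := by
    intro B hB
    apply le_csInf
    · exact (hne.mono subset_closure).image _
    · rintro _ ⟨F, hF, rfl⟩
      have hsub : likelySorted S n {x} α ⊆ {F | B x ≤ distMean S F} := by
        apply closure_minimal _ (isClosed_le continuous_const (aux_cont S))
        rintro G ⟨hG, hGα⟩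
        by_contra hlt
        have hlt' : ¬ B x ≤ distMean S G := hlt
        have h1 := hB G hG
        have h2 := aux_mono S n G hG {y | B (sortTup S n y) ≤ distMean S G}
          {y | sortTup S n y ∈ ({x} : Set (Fin n → ↥S))}ᶜ (by
            intro y hy hyx
            have hyx' : sortTup S n y = x := hyx
            have hy' : B (sortTup S n y) ≤ distMean S G := hy
            rw [hyx'] at hy'
            exact hlt' hy')
        have h3 := aux_compl S n G hG {y | sortTup S n y ∈ ({x} : Set (Fin n → ↥S))}
        unfold probSorted at hGα
        linarith
      exact hsub hF
  refine ⟨key, ?_⟩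
  apply IsGreatest.csSup_eq
  refine ⟨⟨fun y => if y = x then sInf (distMean S '' likelySorted S n {x} α)
    else S.min' hS, ?_, by simp⟩, ?_⟩
  · intro F hF
    by_cases hm : sInf (distMean S '' likelySorted S n {x} α) ≤ distMean S F
    · have : {y | (if sortTup S n y = x then sInf (distMean S '' likelySorted S n {x} α)
          else S.min' hS) ≤ distMean S F} = Set.univ := by
        ext y
        simp only [Set.mem_setOf_eq, Set.mem_univ, iff_true]
        split_ifs
        · exact hm
        · exact aux_min S hS F hF
      simp only [this]
      rw [aux_univ S n F hF]
      linarith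
    · have hbdd : BddBelow (distMean S '' likelySorted S n {x} α) := by
        refine ⟨S.min' hS, ?_⟩
        rintro _ ⟨G, hG, rfl⟩
        have hsub : likelySorted S n {x} α ⊆ {F | S.min' hS ≤ distMean S F} :=
          closure_minimal (fun G hG => aux_min S hS G hG.1)
            (isClosed_le continuous_const (aux_cont S))
        exact hsub hG
      have hn' : ¬ α < probSorted S n F {x} := fun h =>
        hm (csInf_le hbdd ⟨F, subset_closure ⟨hF, h⟩, rfl⟩)
      have h3 := aux_compl S n F hF {y | sortTup S n y ∈ ({x} : Set (Fin n → ↥S))}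
      have h2 := aux_mono S n F hF {y | sortTup S n y ∈ ({x} : Set (Fin n → ↥S))}ᶜ
        {y | (if sortTup S n y = x then sInf (distMean S '' likelySorted S n {x} α)
          else S.min' hS) ≤ distMean S F} (by
          intro y hy
          have hy' : ¬ sortTup S n y = x := hy
          simp only [Set.mem_setOf_eq, if_neg hy']
          exact aux_min S hS F hF)
      unfold probSorted at hn'
      have h4 := not_lt.mp hn'
      refine le_trans ?_ h2
      linarith
  · rintro _ ⟨B, hB, rfl⟩
    exact key B hB

end
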